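/- arXiv:1305.1979 — 5 statements merged into one kernel-verified Lean document; each statement's English description precedes it below -/
import Mathlib

section
/- For every two projection games G and H, the collision value of the product game satisfies ‖G ⊗ H‖ ≤ ‖G‖. -/
open Finset

/-- A projection game: finite nonempty question sets `Q1` (Alice) and `Q2` (Bob),
a finite nonempty alphabet `A`, and a probability mass function `μ` on triples
`(u, v, π)` where `π : A → Option A` encodes a projection constraint
(the answer pair `(α, β)` satisfies `π` iff `π β = some α`). -/
structure ProjGame where
  Q1 : Type
  Q2 : Type
  A : Type
  [fQ1 : Fintype Q1]
  [fQ2 : Fintype Q2]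
  [fA : Fintype A]
  [neQ1 : Nonempty Q1]
  [neQ2 : Nonempty Q2]
  [neA : Nonempty A]
  [dQ1 : DecidableEq Q1]
  [dQ2 : DecidableEq Q2]
  [dA : DecidableEq A]
  μ : Q1 × Q2 × (A → Option A) → ℝ
  μ_nonneg : ∀ x, 0 ≤ μ x
  μ_sum : ∑ x, μ x = 1

attribute [instance] ProjGame.fQ1 ProjGame.fQ2 ProjGame.fA
  ProjGame.neQ1 ProjGame.neQ2 ProjGame.neA ProjGame.dQ1 ProjGame.dQ2 ProjGame.dA

namespace ProjGame

variable (G : ProjGame)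

/-- The `U`-marginal (Alice-side marginal) of `μ`. -/
noncomputable def wU (u : G.Q1) : ℝ := ∑ v, ∑ π, G.μ (u, v, π)

/-- The `V`-marginal (Bob-side marginal) of `μ`. -/
noncomputable def wV (v : G.Q2) : ℝ := ∑ u, ∑ π, G.μ (u, v, π)

/-- The game operator: `(Gf)(u,α) = E_{(v,π)|u} [∑_{β : π β = some α} f (v,β)]`. -/
noncomputable def op (f : G.Q2 × G.A → ℝ) : G.Q1 × G.A → ℝ :=
  fun p =>
    (∑ v, ∑ π, G.μ (p.1, v, π) * ∑ β, if π β = some p.2 then f (v, β) else 0) / G.wU p.1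

/-- Squared norm on functions on `U × Σ`: `‖g‖² = E_u [∑_α g(u,α)²]`. -/
noncomputable def normUsq (g : G.Q1 × G.A → ℝ) : ℝ := ∑ u, G.wU u * ∑ α, (g (u, α)) ^ 2

/-- Squared norm on functions on `V × Σ`: `‖f‖² = E_v [∑_β f(v,β)²]`. -/
noncomputable def normVsq (f : G.Q2 × G.A → ℝ) : ℝ := ∑ v, G.wV v * ∑ β, (f (v, β)) ^ 2

/-- Inner product `⟨g, g'⟩ = E_u [∑_α g(u,α) g'(u,α)]`. -/
noncomputable def inn (g g' : G.Q1 × G.A → ℝ) : ℝ :=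
  ∑ u, G.wU u * ∑ α, g (u, α) * g' (u, α)

/-- An assignment for Bob. -/
def IsBob (f : G.Q2 × G.A → ℝ) : Prop := (∀ p, 0 ≤ f p) ∧ ∀ v, ∑ β, f (v, β) = 1

/-- An assignment for Alice. -/
def IsAlice (g : G.Q1 × G.A → ℝ) : Prop := (∀ p, 0 ≤ g p) ∧ ∀ u, ∑ α, g (u, α) = 1

/-- The value of the game: `val(G) = max ⟨g, Gf⟩` over assignments. -/
noncomputable def val : ℝ :=
  sSup { x | ∃ f g, G.IsBob f ∧ G.IsAlice g ∧ x = G.inn g (G.op f) }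

/-- The collision value `‖G‖ = max_f ‖Gf‖` over assignments `f` for Bob. -/
noncomputable def collVal : ℝ :=
  sSup { x | ∃ f, G.IsBob f ∧ x = Real.sqrt (G.normUsq (G.op f)) }

/-- Product of projection constraints. -/
def tensorC {A A' : Type} (π : A → Option A) (π' : A' → Option A') :
    A × A' → Option (A × A') :=
  fun b => (π b.1).bind fun a => (π' b.2).map fun a' => (a, a')

/-- The product (parallel repetition) of two projection games. -/
noncomputable def tensor (G H : ProjGame) : ProjGame where
  Q1 := G.Q1 × H.Q1
  Q2 := G.Q2 × H.Q2
  A := G.A × H.A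
  μ := fun x =>
    ∑ y : (G.Q1 × G.Q2 × (G.A → Option G.A)) × (H.Q1 × H.Q2 × (H.A → Option H.A)),
      if ((y.1.1, y.2.1), (y.1.2.1, y.2.2.1), tensorC y.1.2.2 y.2.2.2) = x
      then G.μ y.1 * H.μ y.2 else 0
  μ_nonneg := by
    intro x
    refine Finset.sum_nonneg fun y _ => ?_
    split
    · exact mul_nonneg (G.μ_nonneg _) (H.μ_nonneg _)
    · exact le_refl 0
  μ_sum := by
    rw [Finset.sum_comm]
    simp only [Finset.sum_ite_eq, Finset.mem_univ, if_true]
    rw [Fintype.sum_prod_type]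
    calc (∑ y1, ∑ y2, G.μ y1 * H.μ y2)
        = (∑ y1, G.μ y1) * (∑ y2, H.μ y2) := by rw [Finset.sum_mul_sum]
      _ = 1 := by rw [G.μ_sum, H.μ_sum, mul_one]

/-- `G.iterTensor k` is the `(k+1)`-fold parallel repetition `G^{⊗(k+1)}`. -/
noncomputable def iterTensor (G : ProjGame) : ℕ → ProjGame
  | 0 => G
  | n + 1 => G.tensor (G.iterTensor n)

/-- `val₊(G)`: supremum of values of vector assignments. -/
noncomputable def valPlus (G : ProjGame) : ℝ :=
  sSup { x | ∃ n : ℕ, 0 < n ∧ ∃ f : G.Q2 × G.A → Fin n → ℝ,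
    (∀ p i, 0 ≤ f p i) ∧
    (∀ v, Real.sqrt (∑ i, (∑ β, f (v, β) i) ^ 2) ≤ 1) ∧
    x = Real.sqrt (∑ u, G.wU u * ∑ α, ∑ i, (G.op (fun q => f q i) (u, α)) ^ 2) }

/-- `‖Th‖² = E_v [(∑_β h(v,β))²]`. -/
noncomputable def Tnormsq (G : ProjGame) (h : G.Q2 × G.A → ℝ) : ℝ :=
  ∑ v, G.wV v * (∑ β, h (v, β)) ^ 2

/-- `λ₊(G)`: supremum of `‖Gh‖/‖Th‖` over nonnegative `h` with `‖Th‖ > 0`. -/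
noncomputable def lambdaPlus (G : ProjGame) : ℝ :=
  sSup { x | ∃ h : G.Q2 × G.A → ℝ, (∀ p, 0 ≤ h p) ∧
    0 < Real.sqrt (G.Tnormsq h) ∧
    x = Real.sqrt (G.normUsq (G.op h)) / Real.sqrt (G.Tnormsq h) }

/-- The symmetrized distribution on `V × V` (with the constraints marginalized out). -/
noncomputable def msym (G : ProjGame) (v v' : G.Q2) : ℝ :=
  ∑ u, ((∑ π, G.μ (u, v, π)) * (∑ π', G.μ (u, v', π'))) / G.wU u

/-- `G` is `γ`-expanding: the Markov operator of the symmetrized constraint graph has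
spectral gap at least `γ`, i.e. `|⟨x, Ax⟩| ≤ (1-γ) E_v[x(v)²]` for mean-zero `x`. -/
def IsExpanding (G : ProjGame) (γ : ℝ) : Prop :=
  ∀ x : G.Q2 → ℝ, (∑ v, G.wV v * x v) = 0 →
    |∑ v, ∑ v', G.msym v v' * x v * x v'| ≤ (1 - γ) * ∑ v, G.wV v * (x v) ^ 2

/-- The symmetrized distribution on `(v, v', π, π')`. -/
noncomputable def msymFull (G : ProjGame) (v v' : G.Q2) (π π' : G.A → Option G.A) : ℝ :=
  ∑ u, (G.μ (u, v, π) * G.μ (u, v', π')) / G.wU u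

/-- The value of the assignment `x` in the symmetrized game `G_sym`. -/
noncomputable def symValAssign (G : ProjGame) (x : G.Q2 → G.A) : ℝ :=
  ∑ v, ∑ v', ∑ π, ∑ π', G.msymFull v v' π π' *
    (if ∃ α, π (x v) = some α ∧ π' (x v') = some α then 1 else 0)

/-- The value of the symmetrized game `G_sym`. -/
noncomputable def symVal (G : ProjGame) : ℝ :=
  sSup { r | ∃ x : G.Q2 → G.A, r = G.symValAssign x }

end ProjGame

namespace ProjGame

/-- The distribution of the product game, with unfolded types. -/
noncomputable def tmu (G H : ProjGame)
    (x : (G.Q1 × H.Q1) × (G.Q2 × H.Q2) × (G.A × H.A → Option (G.A × H.A))) : ℝ :=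
  (G.tensor H).μ x

lemma aux_tensor_mu (G H : ProjGame) (u : G.Q1) (u' : H.Q1) (v : G.Q2) (v' : H.Q2)
    (P : G.A × H.A → Option (G.A × H.A)) :
    tmu G H ((u, u'), (v, v'), P) =
      ∑ π, ∑ π', if tensorC π π' = P then G.μ (u, v, π) * H.μ (u', v', π') else 0 := by
  change (∑ y : (G.Q1 × G.Q2 × (G.A → Option G.A)) × (H.Q1 × H.Q2 × (H.A → Option H.A)),
      if ((y.1.1, y.2.1), (y.1.2.1, y.2.2.1), tensorC y.1.2.2 y.2.2.2) = ((u, u'), (v, v'), P)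
      then G.μ y.1 * H.μ y.2 else 0) = _
  rw [Fintype.sum_prod_type]
  simp only [Fintype.sum_prod_type, Prod.mk.injEq]
  rw [Finset.sum_eq_single u (by
    intro b _ hb
    simp [hb]) (by simp)]
  rw [Finset.sum_eq_single v (by
    intro b _ hb
    simp [hb]) (by simp)]
  refine Finset.sum_congr rfl fun π _ => ?_
  rw [Finset.sum_eq_single u' (by
    intro b _ hb
    simp [hb]) (by simp)]
  rw [Finset.sum_eq_single v' (by
    intro b _ hb
    simp [hb]) (by simp)]
  simp

lemma aux_tensor_sum (G H : ProjGame) (u : G.Q1) (u' : H.Q1)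
    (Φ : G.Q2 × H.Q2 → (G.A × H.A → Option (G.A × H.A)) → ℝ) :
    (∑ v : G.Q2 × H.Q2, ∑ P : G.A × H.A → Option (G.A × H.A),
      tmu G H ((u, u'), v, P) * Φ v P) =
    ∑ v, ∑ π, G.μ (u, v, π) * ∑ v', ∑ π', H.μ (u', v', π') * Φ (v, v') (tensorC π π') := by
  rw [Fintype.sum_prod_type]
  refine Finset.sum_congr rfl fun v _ => ?_
  have h : ∀ v' : H.Q2, (∑ P, tmu G H ((u, u'), (v, v'), P) * Φ (v, v') P) =
      ∑ π, ∑ π', G.μ (u, v, π) * H.μ (u', v', π') * Φ (v, v') (tensorC π π') := by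
    intro v'
    simp only [aux_tensor_mu, Finset.sum_mul]
    rw [Finset.sum_comm]
    refine Finset.sum_congr rfl fun π _ => ?_
    rw [Finset.sum_comm]
    refine Finset.sum_congr rfl fun π' _ => ?_
    simp [ite_mul]
  rw [Finset.sum_congr rfl fun v' _ => h v', Finset.sum_comm]
  simp only [Finset.mul_sum, mul_assoc]

lemma aux_tensor_wU (G H : ProjGame) (u : G.Q1) (u' : H.Q1) :
    (G.tensor H).wU (u, u') = G.wU u * H.wU u' := by
  have h := aux_tensor_sum G H u u' (fun _ _ => 1)
  simp only [mul_one] at h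
  refine Eq.trans h ?_
  simp only [wU, Finset.sum_mul]

lemma aux_tensorC {A A' : Type} (π : A → Option A) (π' : A' → Option A') (b : A) (b' : A')
    (a : A) (a' : A') :
    tensorC π π' (b, b') = some (a, a') ↔ (π b = some a ∧ π' b' = some a') := by
  unfold tensorC
  cases π b <;> cases π' b' <;> simp

lemma aux_tensor_op (G H : ProjGame) (f : (G.Q2 × H.Q2) × (G.A × H.A) → ℝ)
    (u : G.Q1) (u' : H.Q1) (α : G.A) (α' : H.A) :
    (G.tensor H).op f ((u, u'), (α, α')) =
      G.op (fun p => H.op (fun q => f ((p.1, q.1), (p.2, q.2))) (u', α')) (u, α) := by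
  have h := aux_tensor_sum G H u u' (fun v P => ∑ β, if P β = some (α, α') then f (v, β) else 0)
  refine Eq.trans (congrArg₂ (· / ·) h (aux_tensor_wU G H u u')) ?_
  dsimp only [op]
  rw [mul_comm (G.wU u), ← div_div]
  congr 1
  rw [Finset.sum_div]
  refine Finset.sum_congr rfl fun v _ => ?_
  rw [Finset.sum_div]
  refine Finset.sum_congr rfl fun π _ => ?_
  rw [mul_div_assoc]
  congr 1
  have e : ∀ β : G.A, (if π β = some α then
      (∑ v', ∑ π', H.μ (u', v', π') * ∑ β', if π' β' = some α' then f ((v, v'), (β, β')) else 0)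
        / H.wU u' else 0) =
      (∑ v', ∑ π', H.μ (u', v', π') * ∑ β', if (π β = some α ∧ π' β' = some α') then
        f ((v, v'), (β, β')) else 0) / H.wU u' := by
    intro β
    by_cases hb : π β = some α <;> simp [hb]
  rw [Finset.sum_congr rfl fun β _ => e β, ← Finset.sum_div]
  congr 1
  refine Eq.trans ?_ Finset.sum_comm
  refine Finset.sum_congr rfl fun v' _ => ?_
  refine Eq.trans ?_ Finset.sum_comm
  refine Finset.sum_congr rfl fun π' _ => ?_
  rw [← Finset.mul_sum, Fintype.sum_prod_type]
  simp only [aux_tensorC]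

lemma wU_nonneg (G : ProjGame) (u : G.Q1) : 0 ≤ G.wU u :=
  Finset.sum_nonneg fun _ _ => Finset.sum_nonneg fun _ _ => G.μ_nonneg _

lemma wU_sum (G : ProjGame) : ∑ u, G.wU u = 1 := by
  rw [← G.μ_sum]
  simp only [wU, Fintype.sum_prod_type]

lemma op_mono (G : ProjGame) {f g : G.Q2 × G.A → ℝ} (h : ∀ p, f p ≤ g p) (p : G.Q1 × G.A) :
    G.op f p ≤ G.op g p := by
  unfold op
  refine div_le_div_of_nonneg_right ?_ (G.wU_nonneg _)
  refine Finset.sum_le_sum fun v _ => Finset.sum_le_sum fun π _ => ?_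
  refine mul_le_mul_of_nonneg_left ?_ (G.μ_nonneg _)
  refine Finset.sum_le_sum fun β _ => ?_
  split
  · exact h _
  · exact le_refl 0

lemma op_sum {ι : Type} [Fintype ι] (G : ProjGame) (f : ι → G.Q2 × G.A → ℝ) (p : G.Q1 × G.A) :
    G.op (fun q => ∑ i, f i q) p = ∑ i, G.op (f i) p := by
  unfold op
  rw [← Finset.sum_div]
  congr 1
  refine Eq.trans ?_ Finset.sum_comm
  refine Finset.sum_congr rfl fun v _ => ?_
  refine Eq.trans ?_ Finset.sum_comm
  refine Finset.sum_congr rfl fun π _ => ?_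
  rw [← Finset.mul_sum, Finset.sum_comm]
  congr 1
  refine Finset.sum_congr rfl fun β _ => ?_
  split <;> simp

lemma op_nonneg (G : ProjGame) {f : G.Q2 × G.A → ℝ} (h : ∀ p, 0 ≤ f p) (p : G.Q1 × G.A) :
    0 ≤ G.op f p := by
  have := G.op_mono (f := fun _ => 0) h p
  simpa [op] using this

lemma op_row_le (G : ProjGame) {f : G.Q2 × G.A → ℝ} (h : ∀ p, 0 ≤ f p)
    (h1 : ∀ v, ∑ β, f (v, β) ≤ 1) (u : G.Q1) :
    ∑ α, G.op f (u, α) ≤ 1 := by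
  unfold op
  dsimp only
  rw [← Finset.sum_div]
  refine div_le_one_of_le₀ ?_ (G.wU_nonneg _)
  rw [Finset.sum_comm]
  refine Finset.sum_le_sum fun v _ => ?_
  rw [Finset.sum_comm]
  refine Finset.sum_le_sum fun π _ => ?_
  rw [← Finset.mul_sum]
  refine mul_le_of_le_one_right (G.μ_nonneg _) ?_
  rw [Finset.sum_comm]
  refine le_trans (Finset.sum_le_sum fun β _ => ?_) (h1 v)
  cases hb : π β with
  | none => simpa using h _
  | some a => simp

lemma sum_sq_le {ι : Type} [Fintype ι] (f : ι → ℝ) (h : ∀ i, 0 ≤ f i) :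
    ∑ i, (f i) ^ 2 ≤ (∑ i, f i) ^ 2 :=
  Finset.sum_sq_le_sq_sum_of_nonneg fun i _ => h i

lemma normUsq_le_one (G : ProjGame) {f : G.Q2 × G.A → ℝ} (hf : G.IsBob f) :
    G.normUsq (G.op f) ≤ 1 := by
  rw [← G.wU_sum]
  refine Finset.sum_le_sum fun u _ => mul_le_of_le_one_right (G.wU_nonneg _) ?_
  refine (sum_sq_le _ fun α => G.op_nonneg hf.1 _).trans ?_
  exact pow_le_one₀ (Finset.sum_nonneg fun α _ => G.op_nonneg hf.1 _)
    (G.op_row_le hf.1 (fun v => (hf.2 v).le) u)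

lemma normUsq_nonneg (G : ProjGame) (g : G.Q1 × G.A → ℝ) : 0 ≤ G.normUsq g :=
  Finset.sum_nonneg fun u _ => mul_nonneg (G.wU_nonneg u)
    (Finset.sum_nonneg fun _ _ => sq_nonneg _)

lemma collVal_nonneg (G : ProjGame) : 0 ≤ G.collVal := by
  refine Real.sSup_nonneg ?_
  rintro x ⟨f, _, rfl⟩
  exact Real.sqrt_nonneg _

lemma normUsq_le (G : ProjGame) {f : G.Q2 × G.A → ℝ} (hf : G.IsBob f) :
    G.normUsq (G.op f) ≤ G.collVal ^ 2 := by
  have : Real.sqrt (G.normUsq (G.op f)) ≤ G.collVal := by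
    refine le_csSup ⟨1, ?_⟩ ⟨f, hf, rfl⟩
    rintro x ⟨g, hg, rfl⟩
    exact Real.sqrt_le_one.mpr (G.normUsq_le_one hg)
  exact (Real.sqrt_le_left G.collVal_nonneg).mp this

lemma normUsq_le_sub (G : ProjGame) {f : G.Q2 × G.A → ℝ} (h : ∀ p, 0 ≤ f p)
    (h1 : ∀ v, ∑ β, f (v, β) ≤ 1) :
    G.normUsq (G.op f) ≤ G.collVal ^ 2 := by
  obtain ⟨a⟩ := G.neA
  let g : G.Q2 × G.A → ℝ := fun p => f p + if p.2 = a then 1 - ∑ β, f (p.1, β) else 0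
  have hfg : ∀ p, f p ≤ g p := by
    intro p
    have := h1 p.1
    dsimp only [g]
    split <;> linarith
  have hg : G.IsBob g := by
    refine ⟨fun p => (h p).trans (hfg p), fun v => ?_⟩
    simp [g, Finset.sum_add_distrib]
  refine le_trans ?_ (G.normUsq_le hg)
  refine Finset.sum_le_sum fun u _ => mul_le_mul_of_nonneg_left ?_ (G.wU_nonneg _)
  exact Finset.sum_le_sum fun α _ => pow_le_pow_left₀ (G.op_nonneg h _) (G.op_mono hfg _) 2

lemma normUsq_family (G : ProjGame) {ι : Type} [Fintype ι] (g : ι → G.Q2 × G.A → ℝ)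
    (h : ∀ i p, 0 ≤ g i p) (h1 : ∀ v, ∑ β, ∑ i, g i (v, β) ≤ 1) :
    ∑ i, G.normUsq (G.op (g i)) ≤ G.collVal ^ 2 := by
  refine le_trans ?_ (G.normUsq_le_sub (f := fun q => ∑ i, g i q)
    (fun p => Finset.sum_nonneg fun i _ => h i p) h1)
  unfold normUsq
  rw [Finset.sum_comm]
  refine Finset.sum_le_sum fun u _ => ?_
  rw [← Finset.mul_sum]
  refine mul_le_mul_of_nonneg_left ?_ (G.wU_nonneg _)
  rw [Finset.sum_comm]
  refine Finset.sum_le_sum fun α _ => ?_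
  rw [op_sum]
  exact sum_sq_le _ fun i => G.op_nonneg (h i) _

lemma aux_tensor_norm (G H : ProjGame) (f : (G.Q2 × H.Q2) × (G.A × H.A) → ℝ) :
    (G.tensor H).normUsq ((G.tensor H).op f) = ∑ u', H.wU u' * ∑ α',
      G.normUsq (G.op (fun p => H.op (fun q => f ((p.1, q.1), (p.2, q.2))) (u', α'))) := by
  have e : (G.tensor H).normUsq ((G.tensor H).op f) = ∑ u : G.Q1 × H.Q1,
      (G.tensor H).wU u * ∑ α : G.A × H.A, ((G.tensor H).op f (u, α)) ^ 2 := rfl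
  rw [e, Fintype.sum_prod_type, Finset.sum_comm]
  refine Finset.sum_congr rfl fun u' _ => ?_
  unfold normUsq
  rw [Finset.sum_comm, Finset.mul_sum]
  refine Finset.sum_congr rfl fun u _ => ?_
  rw [aux_tensor_wU, Fintype.sum_prod_type, Finset.sum_comm, ← Finset.mul_sum]
  simp only [aux_tensor_op]
  ring

lemma aux_main (G H : ProjGame) (f : (G.Q2 × H.Q2) × (G.A × H.A) → ℝ)
    (hf : (G.tensor H).IsBob f) :
    (G.tensor H).normUsq ((G.tensor H).op f) ≤ G.collVal ^ 2 := by
  have h0 : ∀ p, 0 ≤ f p := hf.1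
  have hs : ∀ v : G.Q2 × H.Q2, ∑ β : G.A × H.A, f (v, β) = 1 := hf.2
  rw [aux_tensor_norm]
  have : ∑ u', H.wU u' * G.collVal ^ 2 = G.collVal ^ 2 := by
    rw [← Finset.sum_mul, H.wU_sum, one_mul]
  rw [← this]
  refine Finset.sum_le_sum fun u' _ => mul_le_mul_of_nonneg_left ?_ (H.wU_nonneg _)
  refine G.normUsq_family
    (fun α' p => H.op (fun q => f ((p.1, q.1), (p.2, q.2))) (u', α'))
    (fun α' p => H.op_nonneg (fun q => h0 _) _) fun v => ?_
  rw [Finset.sum_comm]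
  dsimp only
  simp only [← op_sum H (fun (β : G.A) q => f ((v, q.1), (β, q.2)))]
  refine H.op_row_le (fun q => Finset.sum_nonneg fun _ _ => h0 _) (fun v' => ?_) u'
  rw [Finset.sum_comm, ← hs (v, v'), Fintype.sum_prod_type]

end ProjGame

/-- The collision value cannot increase under products: `‖G ⊗ H‖ ≤ ‖G‖`. -/
theorem collVal_tensor_le (G H : ProjGame) :
    (G.tensor H).collVal ≤ G.collVal := by
  refine Real.sSup_le ?_ G.collVal_nonneg
  rintro x ⟨f, hf, rfl⟩
  exact (Real.sqrt_le_left G.collVal_nonneg).mpr (ProjGame.aux_main G H f hf)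
end

section
/- Let G be a γ-expanding projection game for some γ ∈ (0,1], and suppose λ₊(G) > 1 − ε for some ε ≥ 0. Then the collision value satisfies ‖G‖² ≥ 1 − 36ε/γ − 18ε. -/
open Finset

namespace ExpAux
open Finset

lemma scaleW {A : Type} [Fintype A] (W : ℝ) (s : A → ℝ) :
    W * ∑ a, (s a / W) ^ 2 = (∑ a, s a ^ 2) / W := by
  by_cases hW : W = 0
  · simp [hW]
  · simp_rw [div_pow]
    rw [← Finset.sum_div]
    field_simp

lemma collB {I A : Type} [Fintype I] [Fintype A] (p : I → ℝ) (q : I → A → ℝ) (x : I → ℝ)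
    (hp : ∀ i, 0 ≤ p i) (hq : ∀ i a, 0 ≤ q i a) (hq1 : ∀ i, ∑ a, q i a ≤ 1)
    (hx : ∀ i, 0 ≤ x i) (W : ℝ) (hW : W = ∑ i, p i) :
    W * ∑ a, ((∑ i, p i * (x i * q i a)) / W) ^ 2 ≤ (∑ i, p i * x i) ^ 2 / W := by
  rw [scaleW]
  have hW0 : 0 ≤ W := hW ▸ Finset.sum_nonneg fun i _ => hp i
  apply div_le_div_of_nonneg_right _ hW0
  have hs : ∀ a, 0 ≤ ∑ i, p i * (x i * q i a) := fun a =>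
    Finset.sum_nonneg fun i _ => mul_nonneg (hp i) (mul_nonneg (hx i) (hq i a))
  have h1 : ∑ a, ∑ i, p i * (x i * q i a) ≤ ∑ i, p i * x i := by
    rw [Finset.sum_comm]
    apply Finset.sum_le_sum
    intro i _
    have : ∑ a, p i * (x i * q i a) = (p i * x i) * ∑ a, q i a := by
      rw [Finset.mul_sum]; exact Finset.sum_congr rfl fun a _ => by ring
    rw [this]
    exact mul_le_of_le_one_right (mul_nonneg (hp i) (hx i)) (hq1 i)
  calc ∑ a, (∑ i, p i * (x i * q i a)) ^ 2 ≤ (∑ a, ∑ i, p i * (x i * q i a)) ^ 2 :=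
        Finset.sum_sq_le_sq_sum_of_nonneg fun a _ => hs a
    _ ≤ _ := pow_le_pow_left₀ (Finset.sum_nonneg fun a _ => hs a) h1 2

lemma ptwise (x y m c : ℝ) (hx : 0 ≤ x) (hy : 0 ≤ y) (hm : 0 ≤ m) (hc0 : 0 ≤ c) (hc1 : c ≤ 1) :
    m ^ 2 * (1 - c) ≤ 4 * (x * y * (1 - c) + (x - m) ^ 2 + (y - m) ^ 2) := by
  have hxy := mul_nonneg hx hy
  have hd : 0 ≤ 1 - c := by linarith
  have h0 := mul_nonneg hxy hd
  have h2 : m ^ 2 * (1 - c) ≤ m ^ 2 := mul_le_of_le_one_right (sq_nonneg m) (by linarith)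
  by_cases h1 : x ≤ m / 2
  · nlinarith [sq_nonneg (y - m)]
  · by_cases h3 : y ≤ m / 2
    · nlinarith [sq_nonneg (x - m)]
    · push Not at h1 h3
      have : m ^ 2 ≤ 4 * (x * y) := by nlinarith
      nlinarith [sq_nonneg (x - m), sq_nonneg (y - m), mul_le_mul_of_nonneg_right this hd]

lemma sqexp {I A : Type} [Fintype I] [Fintype A] (r : I → ℝ) (q : I → A → ℝ) :
    ∑ a, (∑ i, r i * q i a) ^ 2 = ∑ i, ∑ j, r i * r j * ∑ a, q i a * q j a := by
  simp_rw [sq, Finset.sum_mul_sum, Finset.mul_sum]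
  rw [Finset.sum_comm]
  refine Finset.sum_congr rfl fun i _ => ?_
  rw [Finset.sum_comm]
  exact Finset.sum_congr rfl fun j _ => Finset.sum_congr rfl fun a _ => by ring

lemma collA {I A : Type} [Fintype I] [Fintype A] (p : I → ℝ) (q : I → A → ℝ) (x : I → ℝ)
    (hp : ∀ i, 0 ≤ p i) (hq : ∀ i a, 0 ≤ q i a) (hq1 : ∀ i, ∑ a, q i a ≤ 1)
    (hx : ∀ i, 0 ≤ x i) (m : ℝ) (hm : 0 ≤ m) (W : ℝ) (hW : W = ∑ i, p i) :
    m ^ 2 * (W - W * ∑ a, ((∑ i, p i * q i a) / W) ^ 2) ≤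
      4 * ((∑ i, p i * x i) ^ 2 / W - W * ∑ a, ((∑ i, p i * (x i * q i a)) / W) ^ 2
        + 2 * ∑ i, p i * (x i - m) ^ 2) := by
  have hW0 : 0 ≤ W := hW ▸ Finset.sum_nonneg fun i _ => hp i
  have hpx : 0 ≤ ∑ i, p i * (x i - m) ^ 2 :=
    Finset.sum_nonneg fun i _ => mul_nonneg (hp i) (sq_nonneg _)
  rw [scaleW, scaleW]
  rcases hW0.eq_or_lt with h | hpos
  · rw [← h]; simp; exact hpx
  have hc0 : ∀ i j, 0 ≤ ∑ a, q i a * q j a := fun i j =>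
    Finset.sum_nonneg fun a _ => mul_nonneg (hq i a) (hq j a)
  have hc1 : ∀ i j, ∑ a, q i a * q j a ≤ 1 := by
    intro i j
    refine le_trans (Finset.sum_le_sum fun a _ => ?_) (hq1 i)
    refine mul_le_of_le_one_right (hq i a) (le_trans ?_ (hq1 j))
    exact Finset.single_le_sum (f := fun a => q j a) (fun a _ => hq j a) (Finset.mem_univ a)
  have key : ∑ i, ∑ j, p i * p j * (m ^ 2 * (1 - ∑ a, q i a * q j a)) ≤
      ∑ i, ∑ j, p i * p j * (4 * (x i * x j * (1 - ∑ a, q i a * q j a)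
        + (x i - m) ^ 2 + (x j - m) ^ 2)) :=
    Finset.sum_le_sum fun i _ => Finset.sum_le_sum fun j _ =>
      mul_le_mul_of_nonneg_left (ptwise _ _ _ _ (hx i) (hx j) hm (hc0 i j) (hc1 i j))
        (mul_nonneg (hp i) (hp j))
  have e1 : ∑ i, ∑ j, p i * p j * (m ^ 2 * (1 - ∑ a, q i a * q j a)) =
      m ^ 2 * (W ^ 2 - ∑ a, (∑ i, p i * q i a) ^ 2) := by
    rw [sqexp, hW, sq (∑ i, p i), Finset.sum_mul_sum, ← Finset.sum_sub_distrib, Finset.mul_sum]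
    refine Finset.sum_congr rfl fun i _ => ?_
    rw [← Finset.sum_sub_distrib, Finset.mul_sum]
    exact Finset.sum_congr rfl fun j _ => by ring
  have e2 : ∑ i, ∑ j, p i * p j * (4 * (x i * x j * (1 - ∑ a, q i a * q j a)
        + (x i - m) ^ 2 + (x j - m) ^ 2)) =
      4 * ((∑ i, p i * x i) ^ 2 - ∑ a, (∑ i, p i * (x i * q i a)) ^ 2
        + 2 * (W * ∑ i, p i * (x i - m) ^ 2)) := by
    have t1 : W * ∑ i, p i * (x i - m) ^ 2 = ∑ i, ∑ j, p i * p j * (x j - m) ^ 2 := by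
      rw [hW, Finset.sum_mul_sum]
      exact Finset.sum_congr rfl fun i _ => Finset.sum_congr rfl fun j _ => by ring
    have t2 : W * ∑ i, p i * (x i - m) ^ 2 = ∑ i, ∑ j, p i * p j * (x i - m) ^ 2 := by
      rw [t1, Finset.sum_comm]
      exact Finset.sum_congr rfl fun i _ => Finset.sum_congr rfl fun j _ => by ring
    have t3 : ∑ a, (∑ i, p i * (x i * q i a)) ^ 2 =
        ∑ i, ∑ j, (p i * x i) * (p j * x j) * ∑ a, q i a * q j a := by
      rw [← sqexp]; simp_rw [mul_assoc]
    rw [two_mul, t3]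
    nth_rewrite 1 [t1]
    rw [t2, sq (∑ i, p i * x i), Finset.sum_mul_sum]
    simp only [← Finset.sum_sub_distrib, ← Finset.sum_add_distrib, Finset.mul_sum]
    refine Finset.sum_congr rfl fun i _ => Finset.sum_congr rfl fun j _ => ?_
    simp only [← Finset.mul_sum]
    ring
  rw [e1, e2] at key
  have := div_le_div_of_nonneg_right key hW0
  have g1 : ∀ a b : ℝ, a * (W ^ 2 - b) / W = a * (W - b / W) := by
    intro a b; field_simp
  have g2 : ∀ a b c : ℝ, 4 * (a - b + 2 * (W * c)) / W = 4 * (a / W - b / W + 2 * c) := by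
    intro a b c; field_simp
  rw [g1, g2] at this
  exact this

variable (G : ProjGame)

noncomputable def qf (f : G.Q2 × G.A → ℝ) (i : G.Q2 × (G.A → Option G.A)) (a : G.A) : ℝ :=
  ∑ β, if i.2 β = some a then f (i.1, β) else 0

lemma op_eq (f : G.Q2 × G.A → ℝ) (u : G.Q1) (a : G.A) :
    G.op f (u, a) = (∑ i, G.μ (u, i) * qf G f i a) / G.wU u := by
  unfold ProjGame.op qf
  rw [Fintype.sum_prod_type]

lemma wU_eq (u : G.Q1) : G.wU u = ∑ i, G.μ (u, i) := by
  unfold ProjGame.wU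
  rw [Fintype.sum_prod_type]

lemma qf_nonneg (f : G.Q2 × G.A → ℝ) (hf : ∀ p, 0 ≤ f p) (i a) : 0 ≤ qf G f i a :=
  Finset.sum_nonneg fun β _ => by split_ifs; exacts [hf _, le_rfl]

lemma qf_sum (f : G.Q2 × G.A → ℝ) (hf : G.IsBob f) (i) : ∑ a, qf G f i a ≤ 1 := by
  unfold qf
  rw [Finset.sum_comm, ← hf.2 i.1]
  refine Finset.sum_le_sum fun β _ => ?_
  cases h : i.2 β with
  | none => simp; exact hf.1 _
  | some b => simp

lemma qf_mul (f : G.Q2 × G.A → ℝ) (x : G.Q2 → ℝ) (i a) :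
    qf G (fun p => x p.1 * f p) i a = x i.1 * qf G f i a := by
  unfold qf
  rw [Finset.mul_sum]
  exact Finset.sum_congr rfl fun β _ => by split_ifs <;> simp

lemma sumU (F : G.Q2 → ℝ) : ∑ u, ∑ i : G.Q2 × (G.A → Option G.A), G.μ (u, i) * F i.1
    = ∑ v, G.wV v * F v := by
  unfold ProjGame.wV
  simp_rw [Fintype.sum_prod_type, Finset.sum_mul]
  rw [Finset.sum_comm]

lemma wV_sum : ∑ v, G.wV v = 1 := by
  have := sumU G (fun _ => 1)
  simp only [mul_one] at this
  rw [← this, ← G.μ_sum, Fintype.sum_prod_type]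

lemma wU_sum : ∑ u, G.wU u = 1 := by
  simp_rw [wU_eq]
  rw [← G.μ_sum, Fintype.sum_prod_type]

/-- quadratic form -/
noncomputable def Qd (x : G.Q2 → ℝ) : ℝ :=
  ∑ u, (∑ i : G.Q2 × (G.A → Option G.A), G.μ (u, i) * x i.1) ^ 2 / G.wU u

lemma msym_eq (x : G.Q2 → ℝ) : ∑ v, ∑ v', G.msym v v' * x v * x v' = Qd G x := by
  unfold ProjGame.msym Qd
  have e : ∀ u, (∑ i : G.Q2 × (G.A → Option G.A), G.μ (u, i) * x i.1) ^ 2 / G.wU u =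
      ∑ v, ∑ v', ((∑ π, G.μ (u, v, π)) * (∑ π', G.μ (u, v', π'))) / G.wU u * x v * x v' := by
    intro u
    rw [Fintype.sum_prod_type]
    simp_rw [← Finset.sum_mul]
    rw [sq, Finset.sum_mul_sum, Finset.sum_div]
    refine Finset.sum_congr rfl fun v _ => ?_
    rw [Finset.sum_div]
    exact Finset.sum_congr rfl fun v' _ => by ring
  simp_rw [e, Finset.sum_mul]
  rw [Finset.sum_comm (s := (Finset.univ : Finset G.Q1))]
  refine Finset.sum_congr rfl fun v _ => ?_
  rw [Finset.sum_comm]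

lemma Qd_shift (x : G.Q2 → ℝ) (m : ℝ) (hm : ∑ v, G.wV v * x v = m) :
    Qd G (fun v => x v - m) = Qd G x - m ^ 2 := by
  have key : ∀ u, (∑ i : G.Q2 × (G.A → Option G.A), G.μ (u, i) * (x i.1 - m)) ^ 2 / G.wU u =
      (∑ i : G.Q2 × (G.A → Option G.A), G.μ (u, i) * x i.1) ^ 2 / G.wU u
      - 2 * m * (∑ i : G.Q2 × (G.A → Option G.A), G.μ (u, i) * x i.1) + m ^ 2 * G.wU u := by
    intro u
    have e : ∑ i : G.Q2 × (G.A → Option G.A), G.μ (u, i) * (x i.1 - m) =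
        (∑ i : G.Q2 × (G.A → Option G.A), G.μ (u, i) * x i.1) - m * G.wU u := by
      rw [wU_eq, Finset.mul_sum, ← Finset.sum_sub_distrib]
      exact Finset.sum_congr rfl fun i _ => by ring
    rw [e]
    by_cases h : G.wU u = 0
    · have h0 : ∀ i, G.μ (u, i) = 0 := by
        rw [wU_eq, Finset.sum_eq_zero_iff_of_nonneg (fun i _ => G.μ_nonneg _)] at h
        exact fun i => h i (Finset.mem_univ i)
      simp [h, h0]
    · field_simp
      ring
  unfold Qd
  simp_rw [key]
  rw [Finset.sum_add_distrib, Finset.sum_sub_distrib, ← Finset.mul_sum, ← Finset.mul_sum,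
    wU_sum, sumU, hm]
  ring

lemma norm_le_Qd (f : G.Q2 × G.A → ℝ) (hf : G.IsBob f) (x : G.Q2 → ℝ) (hx : ∀ v, 0 ≤ x v) :
    G.normUsq (G.op (fun p => x p.1 * f p)) ≤ Qd G x := by
  unfold ProjGame.normUsq Qd
  refine Finset.sum_le_sum fun u _ => ?_
  simp_rw [op_eq, qf_mul]
  exact collB (fun i => G.μ (u, i)) (qf G f) (fun i => x i.1) (fun i => G.μ_nonneg _)
    (qf_nonneg G f hf.1) (qf_sum G f hf) (fun i => hx i.1) _ (wU_eq G u)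

lemma main_ineq (f : G.Q2 × G.A → ℝ) (hf : G.IsBob f) (x : G.Q2 → ℝ) (hx : ∀ v, 0 ≤ x v)
    (m : ℝ) (hm : 0 ≤ m) :
    m ^ 2 * (1 - G.normUsq (G.op f)) ≤
      4 * (Qd G x - G.normUsq (G.op (fun p => x p.1 * f p))
        + 2 * ∑ v, G.wV v * (x v - m) ^ 2) := by
  rw [← sumU G (fun v => (x v - m) ^ 2)]
  conv_lhs => rw [← wU_sum G]
  unfold ProjGame.normUsq Qd
  rw [← Finset.sum_sub_distrib, ← Finset.sum_sub_distrib, Finset.mul_sum, Finset.mul_sum,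
    ← Finset.sum_add_distrib, Finset.mul_sum]
  refine Finset.sum_le_sum fun u _ => ?_
  simp_rw [op_eq, qf_mul]
  exact collA (fun i => G.μ (u, i)) (qf G f) (fun i => x i.1) (fun i => G.μ_nonneg _)
    (qf_nonneg G f hf.1) (qf_sum G f hf) (fun i => hx i.1) m hm _ (wU_eq G u)

lemma Qd_one : Qd G (fun _ => 1) = 1 := by
  have := Qd_shift G (fun _ => 1) 1 (by simpa using wV_sum G)
  simp [Qd] at this
  simp [Qd]; linarith

lemma wU_nonneg (u : G.Q1) : 0 ≤ G.wU u := by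
  rw [wU_eq]; exact Finset.sum_nonneg fun i _ => G.μ_nonneg _

lemma normU_nonneg (g : G.Q1 × G.A → ℝ) : 0 ≤ G.normUsq g :=
  Finset.sum_nonneg fun u _ => mul_nonneg (wU_nonneg G u)
    (Finset.sum_nonneg fun a _ => sq_nonneg _)

lemma le_coll (f : G.Q2 × G.A → ℝ) (hf : G.IsBob f) : G.normUsq (G.op f) ≤ G.collVal ^ 2 := by
  have hb : BddAbove { x | ∃ f, G.IsBob f ∧ x = Real.sqrt (G.normUsq (G.op f)) } := by
    refine ⟨1, ?_⟩
    rintro _ ⟨g, hg, rfl⟩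
    rw [Real.sqrt_le_one]
    have := norm_le_Qd G g hg (fun _ => 1) (fun _ => zero_le_one)
    rw [Qd_one] at this
    simpa using this
  have h1 : Real.sqrt (G.normUsq (G.op f)) ≤ G.collVal := le_csSup hb ⟨f, hf, rfl⟩
  calc _ = Real.sqrt (G.normUsq (G.op f)) ^ 2 := (Real.sq_sqrt (normU_nonneg G _)).symm
    _ ≤ _ := pow_le_pow_left₀ (Real.sqrt_nonneg _) h1 2

lemma factor (h : G.Q2 × G.A → ℝ) (hh : ∀ p, 0 ≤ h p) :
    ∃ f, G.IsBob f ∧ h = fun p => (∑ β, h (p.1, β)) * f p := by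
  classical
  let a0 : G.A := Classical.arbitrary _
  refine ⟨fun p => if ∑ β, h (p.1, β) = 0 then (if p.2 = a0 then 1 else 0)
    else h p / ∑ β, h (p.1, β), ⟨fun p => ?_, fun v => ?_⟩, ?_⟩
  · have := Finset.sum_nonneg (s := Finset.univ) fun β _ => hh (p.1, β)
    dsimp only
    split_ifs
    · exact zero_le_one
    · exact le_rfl
    · exact div_nonneg (hh p) this
  · dsimp only
    split_ifs with h0
    · simp
    · rw [← Finset.sum_div, div_self h0]
  · funext p
    dsimp only
    split_ifs with h0 h1
    · rw [h0, zero_mul]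
      rw [Finset.sum_eq_zero_iff_of_nonneg (fun β _ => hh _)] at h0
      exact h0 p.2 (Finset.mem_univ _)
    · rw [h0, zero_mul]
      rw [Finset.sum_eq_zero_iff_of_nonneg (fun β _ => hh _)] at h0
      exact h0 p.2 (Finset.mem_univ _)
    · field_simp

lemma final_arith (γ ε e N V Q S R m : ℝ) (hγ0 : 0 < γ) (hγ1 : γ ≤ 1) (hε : 0 ≤ ε)
    (he : e * γ = ε) (hN : 0 < N) (hV : 0 ≤ V) (he1 : e < 1 / 36)
    (hm : m ^ 2 = N - V) (hQ : Q ≤ N - γ * V) (hSQ : S ≤ Q) (hS : (1 - 2 * ε) * N ≤ S)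
    (hR : m ^ 2 * (1 - R) ≤ 4 * (Q - S + 2 * V)) : 1 - 36 * e - 18 * ε ≤ R := by
  have e0 : 0 ≤ e := by
    by_contra h
    push Not at h
    nlinarith
  have hV2 : V ≤ 2 * e * N := by
    have : γ * V ≤ γ * (2 * e * N) := by
      have : γ * (2 * e * N) = 2 * ε * N := by rw [← he]; ring
      linarith
    exact le_of_mul_le_mul_left this hγ0
  have hQS : Q - S ≤ 2 * ε * N := by nlinarith [mul_nonneg hγ0.le hV]
  have hm2 : 17 / 18 * N ≤ m ^ 2 := by nlinarith
  have h1 : m ^ 2 * (1 - R) ≤ (8 * ε + 16 * e) * N := by nlinarith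
  have h2 : (8 * ε + 16 * e) * N ≤ (18 * ε + 36 * e) * m ^ 2 := by
    have : (18 * ε + 36 * e) * (17 / 18 * N) ≤ (18 * ε + 36 * e) * m ^ 2 :=
      mul_le_mul_of_nonneg_left hm2 (by positivity)
    have a : 0 ≤ ε * N := by positivity
    have b : 0 ≤ e * N := by positivity
    nlinarith
  have hmp : 0 < m ^ 2 := by linarith
  have : m ^ 2 * (1 - R) ≤ m ^ 2 * (18 * ε + 36 * e) := by linarith
  have := le_of_mul_le_mul_left this hmp
  linarith

end ExpAux

/-- **Approximation bound for expanding projection games.** If `G` is `γ`-expanding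
and `λ₊(G) > 1 - ε`, then `‖G‖² ≥ 1 - 36ε/γ - 18ε`. -/
theorem expanding_approximation (G : ProjGame) (γ ε : ℝ) (hγ0 : 0 < γ) (hγ1 : γ ≤ 1)
    (hexp : G.IsExpanding γ) (hε : 0 ≤ ε) (hlam : 1 - ε < G.lambdaPlus) :
    1 - 36 * ε / γ - 18 * ε ≤ G.collVal ^ 2 := by
  by_cases hε1 : 1 < ε
  · have : 0 ≤ 36 * ε / γ := by positivity
    nlinarith [sq_nonneg G.collVal]
  by_cases he1 : 1 / 36 ≤ ε / γ
  · have : 36 * ε / γ = 36 * (ε / γ) := by ring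
    nlinarith [sq_nonneg G.collVal]
  push Not at hε1 he1
  have hne : { x | ∃ h : G.Q2 × G.A → ℝ, (∀ p, 0 ≤ h p) ∧
    0 < Real.sqrt (G.Tnormsq h) ∧
    x = Real.sqrt (G.normUsq (G.op h)) / Real.sqrt (G.Tnormsq h) }.Nonempty := by
    by_contra hc
    rw [Set.not_nonempty_iff_eq_empty] at hc
    unfold ProjGame.lambdaPlus at hlam
    rw [hc, Real.sSup_empty] at hlam
    linarith
  obtain ⟨_, ⟨h, hh, hpos, rfl⟩, hlt⟩ := exists_lt_of_lt_csSup hne hlam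
  obtain ⟨f, hf, hhf⟩ := ExpAux.factor G h hh
  set x : G.Q2 → ℝ := fun v => ∑ β, h (v, β) with hxdef
  have hx : ∀ v, 0 ≤ x v := fun v => Finset.sum_nonneg fun β _ => hh _
  have hhf' : h = fun p => x p.1 * f p := hhf
  have hN : 0 < G.Tnormsq h := Real.sqrt_pos.mp hpos
  have hNx : G.Tnormsq h = ∑ v, G.wV v * (x v) ^ 2 := rfl
  have hwV : ∀ v, 0 ≤ G.wV v := fun v =>
    Finset.sum_nonneg fun u _ => Finset.sum_nonneg fun π _ => G.μ_nonneg _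
  obtain ⟨m, hm⟩ : ∃ m, ∑ v, G.wV v * x v = m := ⟨_, rfl⟩
  have hm0 : 0 ≤ m := hm ▸ Finset.sum_nonneg fun v _ => mul_nonneg (hwV v) (hx v)
  have hVar : ∑ v, G.wV v * (x v - m) ^ 2 = G.Tnormsq h - m ^ 2 := by
    have : ∀ v, G.wV v * (x v - m) ^ 2 =
        G.wV v * x v ^ 2 - 2 * m * (G.wV v * x v) + m ^ 2 * G.wV v := fun v => by ring
    simp_rw [this]
    rw [Finset.sum_add_distrib, Finset.sum_sub_distrib, ← Finset.mul_sum, ← Finset.mul_sum,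
      ExpAux.wV_sum, hm, hNx]
    ring
  have hE := hexp (fun v => x v - m) (by
    simp_rw [mul_sub]
    rw [Finset.sum_sub_distrib, ← Finset.sum_mul, ExpAux.wV_sum, hm]
    ring)
  rw [ExpAux.msym_eq, ExpAux.Qd_shift G x m hm] at hE
  have hE' := (le_abs_self _).trans hE
  have hS : (1 - 2 * ε) * G.Tnormsq h ≤ G.normUsq (G.op h) := by
    rw [lt_div_iff₀ hpos] at hlt
    have h2 := pow_le_pow_left₀ (mul_nonneg (by linarith) hpos.le) hlt.le 2
    rw [mul_pow, Real.sq_sqrt hN.le, Real.sq_sqrt (ExpAux.normU_nonneg G _)] at h2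
    nlinarith [mul_nonneg (sq_nonneg ε) hN.le]
  have hSQ := ExpAux.norm_le_Qd G f hf x hx
  have hR := ExpAux.main_ineq G f hf x hx m hm0
  rw [← hhf'] at hSQ hR
  have hfin := ExpAux.final_arith γ ε (ε / γ) (G.Tnormsq h) (∑ v, G.wV v * (x v - m) ^ 2)
    (ExpAux.Qd G x) (G.normUsq (G.op h)) (G.normUsq (G.op f)) m hγ0 hγ1 hε
    (div_mul_cancel₀ _ hγ0.ne') hN
    (Finset.sum_nonneg fun v _ => mul_nonneg (hwV v) (sq_nonneg _)) he1 (by linarith)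
    (by linarith) hSQ hS hR
  have h36 : 36 * ε / γ = 36 * (ε / γ) := by ring
  rw [h36]
  exact hfin.trans (ExpAux.le_coll G f hf)
end

section
/- Let A and B be jointly-distributed nonnegative integrable random variables and let ρ ∈ [0,1]. If E[√(A·B)] = ρ·E[(A+B)/2], then E[min(A,B)] ≥ (1 − √(1−ρ²))·E[(A+B)/2]. -/
open MeasureTheory

theorem le_of_sq_le_sq_aux {a b : ℝ} (hb : 0 ≤ b) (h : a ^ 2 ≤ b ^ 2) : a ≤ b :=
  (le_abs_self a).trans (abs_le_of_sq_le_sq h hb)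

/-- If `E[√(A·B)] = ρ·E[(A+B)/2]` for jointly-distributed nonnegative integrable
random variables `A`, `B` and `ρ ∈ [0,1]`, then
`E[min(A,B)] ≥ (1 - √(1-ρ²))·E[(A+B)/2]`. -/
theorem gm_vs_min {Ω : Type*} [MeasurableSpace Ω] (P : Measure Ω) [IsProbabilityMeasure P]
    (A B : Ω → ℝ) (hA : ∀ ω, 0 ≤ A ω) (hB : ∀ ω, 0 ≤ B ω)
    (hAint : Integrable A P) (hBint : Integrable B P)
    (ρ : ℝ) (hρ0 : 0 ≤ ρ) (hρ1 : ρ ≤ 1)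
    (h : ∫ ω, Real.sqrt (A ω * B ω) ∂P = ρ * ∫ ω, (A ω + B ω) / 2 ∂P) :
    (1 - Real.sqrt (1 - ρ ^ 2)) * ∫ ω, (A ω + B ω) / 2 ∂P
      ≤ ∫ ω, min (A ω) (B ω) ∂P := by
  have hM : Integrable (fun ω => (A ω + B ω) / 2) P := (hAint.add hBint).div_const 2
  have hD : Integrable (fun ω => |A ω - B ω| / 2) P := (hAint.sub hBint).abs.div_const 2
  have hG : Integrable (fun ω => Real.sqrt (A ω * B ω)) P := by
    refine hM.mono' ?_ ?_
    · exact Real.continuous_sqrt.comp_aestronglyMeasurable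
        (hAint.aestronglyMeasurable.mul hBint.aestronglyMeasurable)
    · refine Filter.Eventually.of_forall fun ω => ?_
      rw [Real.norm_of_nonneg (Real.sqrt_nonneg _)]
      have h1 := hA ω
      have h2 := hB ω
      apply Real.sqrt_le_iff.mpr
      constructor
      · positivity
      · nlinarith [sq_nonneg (A ω - B ω)]
  have hmin : ∫ ω, min (A ω) (B ω) ∂P
      = (∫ ω, (A ω + B ω) / 2 ∂P) - ∫ ω, |A ω - B ω| / 2 ∂P := by
    rw [← integral_sub hM hD]
    congr 1
    funext ω
    rcases le_total (A ω) (B ω) with hab | hab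
    · rw [min_eq_left hab, abs_of_nonpos (by linarith)]; ring
    · rw [min_eq_right hab, abs_of_nonneg (by linarith)]; ring
  rw [hmin]
  have hm0 : 0 ≤ ∫ ω, (A ω + B ω) / 2 ∂P :=
    integral_nonneg fun ω => div_nonneg (add_nonneg (hA ω) (hB ω)) (by norm_num)
  have key : ∀ x y : ℝ, x * (∫ ω, |A ω - B ω| / 2 ∂P) + y * (∫ ω, Real.sqrt (A ω * B ω) ∂P)
      ≤ Real.sqrt (x ^ 2 + y ^ 2) * ∫ ω, (A ω + B ω) / 2 ∂P := by
    intro x y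
    rw [← integral_const_mul, ← integral_const_mul, ← integral_const_mul,
      ← integral_add (hD.const_mul x) (hG.const_mul y)]
    refine integral_mono ((hD.const_mul x).add (hG.const_mul y)) (hM.const_mul _) fun ω => ?_
    have h1 := hA ω
    have h2 := hB ω
    have hg := Real.sq_sqrt (mul_nonneg h1 h2)
    have hd := sq_abs (A ω - B ω)
    have hr := Real.sq_sqrt (add_nonneg (sq_nonneg x) (sq_nonneg y))
    have hr0 := Real.sqrt_nonneg (x ^ 2 + y ^ 2)
    show x * (|A ω - B ω| / 2) + y * Real.sqrt (A ω * B ω)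
      ≤ Real.sqrt (x ^ 2 + y ^ 2) * ((A ω + B ω) / 2)
    apply le_of_sq_le_sq_aux
    · positivity
    · generalize Real.sqrt (A ω * B ω) = g at *
      generalize |A ω - B ω| = d at *
      have e : (Real.sqrt (x ^ 2 + y ^ 2) * ((A ω + B ω) / 2)) ^ 2
          = (x ^ 2 + y ^ 2) * ((d / 2) ^ 2 + g ^ 2) := by
        rw [mul_pow, hr, div_pow d, hd, hg]; ring
      rw [e]
      nlinarith [sq_nonneg (x * g - y * (d / 2))]
  have hk := key (∫ ω, |A ω - B ω| / 2 ∂P) (∫ ω, Real.sqrt (A ω * B ω) ∂P)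
  rw [h] at hk
  generalize (∫ ω, (A ω + B ω) / 2 ∂P) = m at *
  generalize (∫ ω, |A ω - B ω| / 2 ∂P) = x at *
  have hr := Real.sq_sqrt (add_nonneg (sq_nonneg x) (sq_nonneg (ρ * m)))
  have hr0 := Real.sqrt_nonneg (x ^ 2 + (ρ * m) ^ 2)
  generalize Real.sqrt (x ^ 2 + (ρ * m) ^ 2) = r at *
  have hrm : r ≤ m := by
    by_contra hc
    push Not at hc
    nlinarith
  have hs := Real.sq_sqrt (show 0 ≤ 1 - ρ ^ 2 by nlinarith)
  have hs0 := Real.sqrt_nonneg (1 - ρ ^ 2)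
  generalize Real.sqrt (1 - ρ ^ 2) = s at *
  have : x ≤ s * m := by
    apply le_of_sq_le_sq_aux (mul_nonneg hs0 hm0)
    rw [mul_pow, hs]
    nlinarith
  linarith
end

section
/- Let A and B be jointly-distributed nonnegative integrable random variables, let Z be a {0,1}-valued random variable on the same probability space, and let ρ ∈ [0,1]. If E[Z·√(A·B)] ≥ ρ·E[(A+B)/2], then E[Z·min(A,B)] ≥ (1 − √(1−ρ²))·E[(A+B)/2]. -/
open MeasureTheory

/-- If `E[Z·√(A·B)] ≥ ρ·E[(A+B)/2]` for jointly-distributed nonnegative integrable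
random variables `A`, `B`, a `{0,1}`-valued `Z`, and `ρ ∈ [0,1]`, then
`E[Z·min(A,B)] ≥ (1 - √(1-ρ²))·E[(A+B)/2]`. -/
theorem gm_vs_min_indicator {Ω : Type*} [MeasurableSpace Ω] (P : Measure Ω)
    [IsProbabilityMeasure P]
    (A B Z : Ω → ℝ) (hA : ∀ ω, 0 ≤ A ω) (hB : ∀ ω, 0 ≤ B ω)
    (hZ : ∀ ω, Z ω = 0 ∨ Z ω = 1) (hZmeas : Measurable Z)
    (hAint : Integrable A P) (hBint : Integrable B P)
    (ρ : ℝ) (hρ0 : 0 ≤ ρ) (hρ1 : ρ ≤ 1)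
    (h : ρ * ∫ ω, (A ω + B ω) / 2 ∂P ≤ ∫ ω, Z ω * Real.sqrt (A ω * B ω) ∂P) :
    (1 - Real.sqrt (1 - ρ ^ 2)) * ∫ ω, (A ω + B ω) / 2 ∂P
      ≤ ∫ ω, Z ω * min (A ω) (B ω) ∂P := by
  have hS : Integrable (fun ω => (A ω + B ω) / 2) P := (hAint.add hBint).div_const 2
  have hZn : ∀ ω, ‖Z ω‖ ≤ 1 := fun ω => by rcases hZ ω with h | h <;> simp [h]
  have hGS : ∀ ω, √(A ω * B ω) ≤ (A ω + B ω) / 2 := fun ω => by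
    apply Real.sqrt_le_iff.2
    constructor
    · linarith [hA ω, hB ω]
    · nlinarith [sq_nonneg (A ω - B ω)]
  have hG : Integrable (fun ω => √(A ω * B ω)) P := by
    refine hS.mono' ?_ (Filter.Eventually.of_forall fun ω => ?_)
    · exact (Real.continuous_sqrt.comp_aestronglyMeasurable
        (hAint.aestronglyMeasurable.mul hBint.aestronglyMeasurable))
    · rw [Real.norm_of_nonneg (Real.sqrt_nonneg _)]
      exact hGS ω
  have hM : Integrable (fun ω => min (A ω) (B ω)) P := hAint.inf hBint
  have hZG : Integrable (fun ω => Z ω * √(A ω * B ω)) P :=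
    hG.bdd_mul hZmeas.aestronglyMeasurable (Filter.Eventually.of_forall hZn)
  have hZM : Integrable (fun ω => Z ω * min (A ω) (B ω)) P :=
    hM.bdd_mul hZmeas.aestronglyMeasurable (Filter.Eventually.of_forall hZn)
  have hs0 : 0 ≤ √(1 - ρ ^ 2) := Real.sqrt_nonneg _
  have hs2 : √(1 - ρ ^ 2) ^ 2 = 1 - ρ ^ 2 := Real.sq_sqrt (by nlinarith)
  generalize √(1 - ρ ^ 2) = s at hs0 hs2
  have hs1 : s ≤ 1 := by nlinarith
  rcases hs0.eq_or_lt with hs | hs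
  · subst hs
    have hρ : ρ = 1 := by nlinarith
    subst hρ
    have hle : ∀ ω, 0 ≤ (A ω + B ω) / 2 - Z ω * √(A ω * B ω) := fun ω => by
      rcases hZ ω with h | h <;> rw [h] <;> linarith [hGS ω, hA ω, hB ω]
    have hz : ∫ ω, ((A ω + B ω) / 2 - Z ω * √(A ω * B ω)) ∂P = 0 := by
      apply le_antisymm
      · rw [integral_sub hS hZG]; linarith
      · exact integral_nonneg hle
    rw [integral_eq_zero_iff_of_nonneg hle (hS.sub hZG)] at hz
    rw [sub_zero, one_mul]
    refine integral_mono_ae hS hZM ?_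
    filter_upwards [hz] with ω hω
    simp only [Pi.zero_apply] at hω
    have hq := Real.sq_sqrt (mul_nonneg (hA ω) (hB ω))
    rcases hZ ω with h | h <;> rw [h] at hω ⊢
    · linarith
    · have h1 : √(A ω * B ω) = (A ω + B ω) / 2 := by linarith
      rw [h1] at hq
      have h2 : (A ω - B ω) ^ 2 = 0 := by nlinarith
      have h3 : A ω = B ω := by
        have := pow_eq_zero_iff (two_ne_zero) |>.1 h2
        linarith
      rw [h3]; simp
  · have key : ∫ ω, (ρ * (Z ω * √(A ω * B ω)) - (1 - s) * ((A ω + B ω) / 2)) ∂P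
        ≤ ∫ ω, s * (Z ω * min (A ω) (B ω)) ∂P := by
      refine integral_mono ((hZG.const_mul ρ).sub (hS.const_mul (1 - s))) (hZM.const_mul s) ?_
      intro ω
      have ha := hA ω
      have hb := hB ω
      have hq := Real.sq_sqrt (mul_nonneg ha hb)
      simp only
      rcases hZ ω with h | h <;> rw [h]
      · nlinarith [mul_nonneg (sub_nonneg.2 hs1) (add_nonneg ha hb)]
      · generalize √(A ω * B ω) = g at hq
        generalize A ω = a at *
        generalize B ω = b at *
        have hmain : ∀ d : ℝ, d ^ 2 = ((a - b) / 2) ^ 2 → ρ * g + s * d ≤ (a + b) / 2 := by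
          intro d hd
          apply abs_le_of_sq_le_sq' _ (by linarith) |>.2
          have : (ρ * g + s * d) ^ 2 + (ρ * d - s * g) ^ 2
              = (ρ ^ 2 + s ^ 2) * (g ^ 2 + d ^ 2) := by ring
          rw [hs2, hq, hd] at this
          nlinarith [sq_nonneg (ρ * d - s * g)]
        rcases le_total a b with hab | hab
        · rw [min_eq_left hab]
          have := hmain ((b - a) / 2) (by ring)
          linarith
        · rw [min_eq_right hab]
          have := hmain ((a - b) / 2) (by ring)
          linarith
    rw [integral_sub (hZG.const_mul ρ) (hS.const_mul (1 - s)), integral_const_mul,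
      integral_const_mul, integral_const_mul] at key
    have h2 := mul_le_mul_of_nonneg_left h hρ0
    refine le_of_mul_le_mul_left (le_trans ?_ key) hs
    have h3 : ρ ^ 2 = 1 - s ^ 2 := by linarith
    rw [← mul_assoc, ← sq, h3] at h2
    linarith
end

section
/- Let G be a projection game, n ≥ 1, and let f : V × Σ × Fin n → ℝ be nonnegative. Then there exists a nonnegative f' : V × Σ × Fin n → ℝ such that every slice of f' is deterministic (for each v ∈ V and ω ∈ Fin n there is at most one β ∈ Σ with f'(v,β,ω) ≠ 0), such that for every v ∈ V, ∑_ω (∑_β f'(v,β,ω))² = ∑_ω (∑_β f(v,β,ω))², and such that E_u[∑_α ∑_ω (G f'_ω)(u,α)²] ≥ E_u[∑_α ∑_ω (G f_ω)(u,α)²], where f_ω and f'_ω denote the slices f(·,·,ω) and f'(·,·,ω). -/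
open Finset

theorem hull_aux {A : Type} [Fintype A] [DecidableEq A] [Nonempty A] (g : A → ℝ) (hg : ∀ a, 0 ≤ g a) :
    g ∈ convexHull ℝ (Set.range fun b : A => (Pi.single b (∑ a, g a) : A → ℝ)) := by
  rcases (Finset.sum_nonneg fun a (_ : a ∈ Finset.univ) => hg a).eq_or_lt with h | h
  · apply subset_convexHull
    refine ⟨Classical.arbitrary A, ?_⟩
    have h0 := (Finset.sum_eq_zero_iff_of_nonneg fun a (_ : a ∈ Finset.univ) => hg a).1 h.symm
    funext a
    simp [← h, h0 a]
  · have key : g = ∑ b, (g b / ∑ a, g a) • (Pi.single b (∑ a, g a) : A → ℝ) := by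
      funext a
      simp [Finset.sum_apply, Pi.single_apply, h.ne']
    have := (convex_convexHull ℝ (Set.range fun b : A => (Pi.single b (∑ a, g a) : A → ℝ))).sum_mem
      (t := Finset.univ) (w := fun b => g b / ∑ a, g a) (z := fun b => Pi.single b (∑ a, g a))
      (fun b _ => div_nonneg (hg b) h.le) (by rw [← Finset.sum_div, div_self h.ne'])
      (fun b _ => subset_convexHull _ _ ⟨b, rfl⟩)
    rwa [← key] at this

theorem op_isLinear (G : ProjGame) (n : ℕ) (u : G.Q1) (α : G.A) (ω : Fin n) :
    IsLinearMap ℝ (fun h : G.Q2 × Fin n → G.A → ℝ =>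
      G.op (fun q => h (q.1, ω) q.2) (u, α)) := by
  constructor
  · intro h k
    simp only [ProjGame.op, Pi.add_apply]
    rw [← add_div, ← Finset.sum_add_distrib]
    congr 1
    refine Finset.sum_congr rfl fun v _ => ?_
    rw [← Finset.sum_add_distrib]
    refine Finset.sum_congr rfl fun π _ => ?_
    rw [← mul_add, ← Finset.sum_add_distrib]
    congr 1
    refine Finset.sum_congr rfl fun b _ => ?_
    split_ifs <;> simp
  · intro c h
    simp only [ProjGame.op, Pi.smul_apply, smul_eq_mul]
    rw [← mul_div_assoc, Finset.mul_sum]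
    congr 1
    refine Finset.sum_congr rfl fun v _ => ?_
    rw [Finset.mul_sum]
    refine Finset.sum_congr rfl fun π _ => ?_
    rw [mul_left_comm c]
    congr 1
    rw [Finset.mul_sum]
    refine Finset.sum_congr rfl fun b _ => ?_
    split_ifs <;> simp

theorem convexOn_sum_aux {E ι : Type} [AddCommGroup E] [Module ℝ E] (t : Finset ι)
    (F : ι → E → ℝ) (hF : ∀ i, ConvexOn ℝ Set.univ (F i)) :
    ConvexOn ℝ Set.univ (fun x => ∑ i ∈ t, F i x) := by
  classical
  induction t using Finset.induction_on with
  | empty => simpa using convexOn_const (𝕜 := ℝ) (s := (Set.univ : Set E)) (0 : ℝ) convex_univ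
  | insert a s ha ih =>
    simp only [Finset.sum_insert ha]
    exact (hF a).add ih

theorem F_convex (G : ProjGame) (n : ℕ) :
    ConvexOn ℝ Set.univ (fun h : G.Q2 × Fin n → G.A → ℝ =>
      ∑ u, G.wU u * ∑ α, ∑ ω, (G.op (fun q => h (q.1, ω) q.2) (u, α)) ^ 2) := by
  refine convexOn_sum_aux _ _ fun u => ?_
  have hw : 0 ≤ G.wU u :=
    Finset.sum_nonneg fun v _ => Finset.sum_nonneg fun π _ => G.μ_nonneg _
  refine ConvexOn.smul hw (convexOn_sum_aux _ _ fun α => convexOn_sum_aux _ _ fun ω => ?_)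
  exact (even_two.convexOn_pow (𝕜 := ℝ)).comp_linearMap (op_isLinear G n u α ω).mk'

/-- **Determinization of vector assignments.** Any nonnegative
`f : V × Σ × Fin n → ℝ` can be replaced by a nonnegative `f'` whose slices are
deterministic, preserving `∑_ω (∑_β f(v,β,ω))²` for every `v` and not decreasing
`E_u[∑_α ∑_ω (G f_ω)(u,α)²]`. -/
theorem exists_deterministic_vector_assignment (G : ProjGame) (n : ℕ) (hn : 1 ≤ n)
    (f : G.Q2 × G.A × Fin n → ℝ) (hf : ∀ p, 0 ≤ f p) :
    ∃ f' : G.Q2 × G.A × Fin n → ℝ,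
      (∀ p, 0 ≤ f' p) ∧
      (∀ (v : G.Q2) (ω : Fin n) (β β' : G.A),
        f' (v, β, ω) ≠ 0 → f' (v, β', ω) ≠ 0 → β = β') ∧
      (∀ v : G.Q2, ∑ ω, (∑ β, f' (v, β, ω)) ^ 2 = ∑ ω, (∑ β, f (v, β, ω)) ^ 2) ∧
      (∑ u, G.wU u * ∑ α, ∑ ω, (G.op (fun q => f (q.1, q.2, ω)) (u, α)) ^ 2
        ≤ ∑ u, G.wU u * ∑ α, ∑ ω, (G.op (fun q => f' (q.1, q.2, ω)) (u, α)) ^ 2) := by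
  have hmem : (fun (i : G.Q2 × Fin n) (b : G.A) => f (i.1, b, i.2)) ∈
      convexHull ℝ (Set.univ.pi fun i : G.Q2 × Fin n =>
        Set.range fun b : G.A => (Pi.single b (∑ a, f (i.1, a, i.2)) : G.A → ℝ)) := by
    rw [convexHull_pi]
    intro i _
    exact hull_aux (fun b => f (i.1, b, i.2)) (fun b => hf _)
  obtain ⟨h, hh, hle⟩ := (F_convex G n).exists_ge_of_mem_convexHull (Set.subset_univ _) hmem
  choose X hX using fun i => hh i (Set.mem_univ i)
  refine ⟨fun p => h (p.1, p.2.2) p.2.1, ?_, ?_, ?_, hle⟩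
  · rintro ⟨v, b, ω⟩
    simp only [← hX, Pi.single_apply]
    split_ifs
    · exact Finset.sum_nonneg fun a _ => hf _
    · exact le_rfl
  · intro v ω b b' h1 h2
    simp only [← hX, Pi.single_apply] at h1 h2
    have e1 := (ite_ne_right_iff.1 h1).1
    have e2 := (ite_ne_right_iff.1 h2).1
    rw [e1, e2]
  · intro v
    simp [← hX, Pi.single_apply]
end
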